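/- arXiv:2603.01173 — 2 statements merged into one kernel-verified Lean document; each statement's English description precedes it below -/
import Mathlib

section
/- (Closed form of the braking margin after detection.) Let a > 0, Δt > 0, and let v, d : ℕ → ℝ and ℓ : ℕ → ℝ satisfy v(k+1) = v(k) − a·Δt and d(k+1) = d(k) + (ℓ(k+1) − v(k+1))·Δt for all k. Then for every k ∈ ℕ, the braking margin Φ(k) := d(k) − v(k)²/(2a) satisfies Φ(k) = Φ(0) + Σ_{j=1}^{k} ℓ(j)·Δt + k·a·Δt²/2. -/
/-!
Write `Φ(k) = d(k) - s(k)` with `s = v² / (2a)` the stopping distance. Braking for one period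
lowers the stopping distance by the mean speed times `Δt`, that is by `v(k+1) Δt + a Δt² / 2`. The
gap recursion charges only the end-of-period speed `v(k+1) Δt`, so this term cancels and each period
adds `ℓ(k+1) Δt + a Δt² / 2` to the margin. The closed form is the sum of these increments.
-/

theorem eq_add_sum_Icc_of_succ {M : Type*} [AddCommMonoid M] {u c : ℕ → M}
    (hu : ∀ k, u (k + 1) = u k + c (k + 1)) (k : ℕ) :
    u k = u 0 + ∑ j ∈ Finset.Icc 1 k, c j := by
  induction k with
  | zero => simp
  | succ k ih => rw [hu, ih, Finset.sum_Icc_succ_top (Nat.le_add_left 1 k), add_assoc]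

section Braking

variable {K : Type*} [Field K]

/-- The distance `v² / (2a)` needed to stop from speed `v` at constant deceleration `a`. As division
by zero gives `0`, it is meaningful only when `2a ≠ 0`. -/
def stoppingDistance (a v : K) : K :=
  v ^ 2 / (2 * a)

/-- The braking margin `Φ`: the part of the gap `d` left over once the stopping distance from
speed `v` at deceleration `a` is set aside. -/
def brakingMargin (a d v : K) : K :=
  d - stoppingDistance a v

variable [NeZero (2 : K)] {a : K}

theorem stoppingDistance_sub_mul (ha : a ≠ 0) (v Δt : K) :
    stoppingDistance a (v - a * Δt) =
      stoppingDistance a v - ((v - a * Δt) * Δt + a * Δt ^ 2 / 2) := by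
  unfold stoppingDistance
  field_simp
  ring

theorem brakingMargin_add_mul_sub_mul (ha : a ≠ 0) (d v ℓ Δt : K) :
    brakingMargin a (d + (ℓ - (v - a * Δt)) * Δt) (v - a * Δt) =
      brakingMargin a d v + (ℓ * Δt + a * Δt ^ 2 / 2) := by
  unfold brakingMargin
  rw [stoppingDistance_sub_mul ha]
  ring

theorem stmt_13_general {Δt : K} {v d ℓ : ℕ → K} (ha : a ≠ 0)
    (hv : ∀ k, v (k + 1) = v k - a * Δt)
    (hd : ∀ k, d (k + 1) = d k + (ℓ (k + 1) - v (k + 1)) * Δt) (k : ℕ) :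
    brakingMargin a (d k) (v k) =
      brakingMargin a (d 0) (v 0) + ∑ j ∈ Finset.Icc 1 k, ℓ j * Δt + k * a * Δt ^ 2 / 2 := by
  have margin_succ (k : ℕ) : brakingMargin a (d (k + 1)) (v (k + 1)) =
      brakingMargin a (d k) (v k) + (ℓ (k + 1) * Δt + a * Δt ^ 2 / 2) := by
    rw [hd, hv, brakingMargin_add_mul_sub_mul ha]
  calc brakingMargin a (d k) (v k)
    _ = brakingMargin a (d 0) (v 0) + ∑ j ∈ Finset.Icc 1 k, (ℓ j * Δt + a * Δt ^ 2 / 2) :=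
      eq_add_sum_Icc_of_succ (u := fun k ↦ brakingMargin a (d k) (v k))
        (c := fun j ↦ ℓ j * Δt + a * Δt ^ 2 / 2) margin_succ k
    _ = brakingMargin a (d 0) (v 0) + ∑ j ∈ Finset.Icc 1 k, ℓ j * Δt + k * a * Δt ^ 2 / 2 := by
      rw [Finset.sum_add_distrib, Finset.sum_const, Nat.card_Icc, Nat.add_sub_cancel, nsmul_eq_mul]
      ring

end Braking

/-- Closed form of the braking margin after detection: under emergency
braking `v(k+1) = v(k) − a·Δt` and the gap recursion, the braking margin
`Φ(k) := d(k) − v(k)²/(2a)` satisfies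
`Φ(k) = Φ(0) + Σ_{j=1}^{k} ℓ(j)·Δt + k·a·Δt²/2`. -/
theorem stmt_13 (a Δt : ℝ) (v d ℓ : ℕ → ℝ)
    (ha : 0 < a) (hΔt : 0 < Δt)
    (hv : ∀ k, v (k + 1) = v k - a * Δt)
    (hd : ∀ k, d (k + 1) = d k + (ℓ (k + 1) - v (k + 1)) * Δt) :
    ∀ k : ℕ, d k - v k ^ 2 / (2 * a)
      = (d 0 - v 0 ^ 2 / (2 * a)) + (∑ j ∈ Finset.Icc 1 k, ℓ j * Δt)
        + (k : ℝ) * a * Δt ^ 2 / 2 :=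
  stmt_13_general ha.ne' hv hd
end

section
/- (Theorem 6.1, full statement: IDS braking assures collision avoidance.) Let a > 0, h > 0, Δt > 0, N, M ∈ ℕ with M ≤ N and N·Δt ≤ h, and let d, v_h, v_ℓ : ℕ → ℝ be sequences satisfying d(k+1) = d(k) + (v_ℓ(k+1) − v_h(k+1))·Δt for all k, and v_ℓ(k) ≥ 0 for all k. Suppose: (i) d(0) ≥ h·v_h(0) + v_h(0)²/(2a); (ii) there is v̄ with 0 ≤ v̄ ≤ v_h(0) and v_h(j) ≤ v̄ for all j = 1, …, M; (iii) v_h(M) ≥ 0; and (iv) for all k ≥ M, v_h(k+1) = v_h(k) − a·Δt. Then for every k ≥ M, d(k) ≥ v_h(k)²/(2a) ≥ 0; in particular d(k) ≥ 0 for all k ≥ M, so the inter-vehicle gap never becomes negative after detection and a collision is avoided. -/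
/-!
Since the lead vehicle never reverses, the gap shrinks in one step by at most the distance the host
travels. Before detection this loses at most `M * Δt * v 0 ≤ h * v 0`, which the reaction distance
pays for; what remains still covers the braking distance. Under braking, the host travels
`(v - a * Δt) * Δt` in a step, while its braking distance drops by that amount plus
`a * Δt ^ 2 / 2`, so the inequality between gap and braking distance is preserved from then on.
-/

theorem sub_nsmul_le_of_forall_sub_le_succ {G : Type*} [AddCommGroup G] [PartialOrder G]
    [IsOrderedAddMonoid G] {d : ℕ → G} {c : G} {n : ℕ} (hd : ∀ k < n, d k - c ≤ d (k + 1)) :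
    d 0 - n • c ≤ d n := by
  induction n with
  | zero => simp
  | succ n ih =>
    calc d 0 - (n + 1) • c = d 0 - n • c - c := by rw [succ_nsmul, sub_sub]
      _ ≤ d n - c := sub_le_sub_right (ih fun k hk => hd k (hk.trans n.lt_succ_self)) c
      _ ≤ d (n + 1) := hd n n.lt_succ_self

section Braking

variable {K : Type*} [Field K]

/-- The distance `v² / (2a)` needed to stop from speed `v` at constant deceleration `a`: the summand
`d_brake` of the safe distance. It is also used for negative `v`, since braking at a constant rate
in the model does not stop at speed zero. -/
def brakingDistance (a v : K) : K :=
  v ^ 2 / (2 * a)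

variable [LinearOrder K] [IsStrictOrderedRing K] {a h Δt : K} {d v : ℕ → K} {M : ℕ}

theorem brakingDistance_nonneg (ha : 0 ≤ a) (w : K) : 0 ≤ brakingDistance a w := by
  unfold brakingDistance
  positivity

theorem brakingDistance_le_of_abs_le {w w' : K} (ha : 0 ≤ a) (hw : |w| ≤ |w'|) :
    brakingDistance a w ≤ brakingDistance a w' :=
  div_le_div_of_nonneg_right (sq_le_sq.2 hw) (by positivity)

theorem brakingDistance_sub_mul (ha : a ≠ 0) (w t : K) :
    brakingDistance a (w - a * t) = brakingDistance a w - (w - a * t) * t - a * t ^ 2 / 2 := by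
  unfold brakingDistance
  field_simp
  ring

theorem brakingDistance_sub_mul_le (ha : 0 < a) (w t : K) :
    brakingDistance a (w - a * t) ≤ brakingDistance a w - (w - a * t) * t := by
  rw [brakingDistance_sub_mul ha.ne']
  exact sub_le_self _ (by positivity)

theorem brakingDistance_le_gap_of_safe_start (ha : 0 ≤ a) (hΔt : 0 ≤ Δt) (hMh : M * Δt ≤ h)
    (hgap : ∀ k < M, d k - v (k + 1) * Δt ≤ d (k + 1))
    (hsafe : h * v 0 + brakingDistance a (v 0) ≤ d 0)
    (hv : ∀ k < M, v (k + 1) ≤ v 0) (hvM : |v M| ≤ v 0) :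
    brakingDistance a (v M) ≤ d M := by
  have hv0 : 0 ≤ v 0 := (abs_nonneg _).trans hvM
  have hstep : ∀ k < M, d k - v 0 * Δt ≤ d (k + 1) := fun k hk =>
    (sub_le_sub_left (mul_le_mul_of_nonneg_right (hv k hk) hΔt) _).trans (hgap k hk)
  calc brakingDistance a (v M) ≤ brakingDistance a (v 0) :=
        brakingDistance_le_of_abs_le ha (hvM.trans (le_abs_self _))
    _ ≤ d 0 - h * v 0 := le_sub_iff_add_le'.2 hsafe
    _ ≤ d 0 - M * Δt * v 0 := by gcongr
    _ = d 0 - M • (v 0 * Δt) := by rw [nsmul_eq_mul]; ring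
    _ ≤ d M := sub_nsmul_le_of_forall_sub_le_succ hstep

theorem brakingDistance_le_gap_of_braking (ha : 0 < a)
    (hgap : ∀ k, M ≤ k → d k - v (k + 1) * Δt ≤ d (k + 1))
    (hbrake : ∀ k, M ≤ k → v (k + 1) = v k - a * Δt)
    (hM : brakingDistance a (v M) ≤ d M) {k : ℕ} (hk : M ≤ k) :
    brakingDistance a (v k) ≤ d k := by
  induction k, hk using Nat.le_induction with
  | base => exact hM
  | succ k hk ih =>
    calc brakingDistance a (v (k + 1)) ≤ brakingDistance a (v k) - v (k + 1) * Δt := by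
          rw [hbrake k hk]
          exact brakingDistance_sub_mul_le ha (v k) Δt
      _ ≤ d k - v (k + 1) * Δt := sub_le_sub_right ih _
      _ ≤ d (k + 1) := hgap k hk

theorem stmt_14_general {vh vl : ℕ → K} (ha : 0 < a) (hΔt : 0 ≤ Δt) (hMh : M * Δt ≤ h)
    (hrec : ∀ k, d (k + 1) = d k + (vl (k + 1) - vh (k + 1)) * Δt)
    (hvl : ∀ k, 0 ≤ vl k)
    (hsafe : d 0 ≥ h * vh 0 + (vh 0) ^ 2 / (2 * a))
    (hbound : ∀ j, 1 ≤ j → j ≤ M → vh j ≤ vh 0)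
    (hvM : -vh 0 ≤ vh M)
    (hbrake : ∀ k, M ≤ k → vh (k + 1) = vh k - a * Δt) :
    ∀ k, M ≤ k → d k ≥ (vh k) ^ 2 / (2 * a) ∧ (vh k) ^ 2 / (2 * a) ≥ 0 := by
  have hgap : ∀ k, d k - vh (k + 1) * Δt ≤ d (k + 1) := fun k => by
    linarith [hrec k, mul_nonneg (hvl (k + 1)) hΔt]
  have hvM0 : vh M ≤ vh 0 := by
    rcases M.eq_zero_or_pos with rfl | hM
    · exact le_rfl
    · exact hbound M hM le_rfl
  have hdetect : brakingDistance a (vh M) ≤ d M :=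
    brakingDistance_le_gap_of_safe_start ha.le hΔt hMh (fun k _ => hgap k) hsafe
      (fun k hk => hbound (k + 1) k.succ_pos hk) (abs_le.2 ⟨hvM, hvM0⟩)
  exact fun k hk => ⟨brakingDistance_le_gap_of_braking ha (fun k _ => hgap k) hbrake hdetect hk,
    brakingDistance_nonneg ha.le (vh k)⟩

end Braking

/-- Theorem 6.1, full statement (IDS braking assures collision avoidance):
under the gap recursion, nonnegative lead speed, a safe initial gap
`d(0) ≥ h·v_h(0) + v_h(0)²/(2a)`, a host-speed upper bound
`0 ≤ v̄ ≤ v_h(0)` during the detection window of length `M ≤ N` with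
`N·Δt ≤ h`, `v_h(M) ≥ 0`, and emergency braking `v_h(k+1) = v_h(k) − a·Δt` for
all `k ≥ M`, we have `d(k) ≥ v_h(k)²/(2a) ≥ 0` for all `k ≥ M`; in particular
the inter-vehicle gap never becomes negative after detection. -/
theorem stmt_14 (a h Δt : ℝ) (N M : ℕ) (d vh vl : ℕ → ℝ) (vbar : ℝ)
    (ha : 0 < a) (hh : 0 < h) (hΔt : 0 < Δt)
    (hMN : M ≤ N) (hNh : (N : ℝ) * Δt ≤ h)
    (hrec : ∀ k, d (k + 1) = d k + (vl (k + 1) - vh (k + 1)) * Δt)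
    (hvl : ∀ k, 0 ≤ vl k)
    (hsafe : d 0 ≥ h * vh 0 + (vh 0) ^ 2 / (2 * a))
    (hvbar0 : 0 ≤ vbar) (hvbar1 : vbar ≤ vh 0)
    (hbound : ∀ j, 1 ≤ j → j ≤ M → vh j ≤ vbar)
    (hvM : 0 ≤ vh M)
    (hbrake : ∀ k, M ≤ k → vh (k + 1) = vh k - a * Δt) :
    ∀ k, M ≤ k → d k ≥ (vh k) ^ 2 / (2 * a) ∧ (vh k) ^ 2 / (2 * a) ≥ 0 := by
  have hMh : (M : ℝ) * Δt ≤ h := le_trans (by gcongr) hNh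
  exact stmt_14_general ha hΔt.le hMh hrec hvl hsafe
    (fun j hj hjM => (hbound j hj hjM).trans hvbar1) (by linarith) hbrake
end
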